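/- arXiv:1612.02960 — 2 statements merged into one kernel-verified Lean document; each statement's English description precedes it below -/
import Mathlib

section
/- Let a = (3 4)(5 7) and b = (1 2 3 4 5 6 7) be permutations of a seven-element set (a is the product of the transpositions swapping 3 with 4 and 5 with 7; b is the 7-cycle). Then a has order 2, b has order 7, the product a·b has order 4, and the subgroup of the symmetric group generated by {a, b} is a simple group of cardinality 168. -/
/-! Because `a = (a * b ^ 3) * (b ^ 3)⁻¹` and `a * b ^ 3` also has order seven, `⟨a, b⟩` is a
transitive group of prime degree `7` generated by elements of order `7`. Any such group `G` of prime
degree `p` is simple: a nontrivial normal subgroup is transitive, so `p` divides its order, and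
since `p ^ 2` does not divide `p !` its index is prime to `p`; hence it contains every element of
order `p`.

The elements `a * b ^ 2`, `a * b` and `b` have orders `3`, `4` and `7`, so `84` divides the order.
On the other hand `⟨a, b⟩` preserves a Fano plane, whose collineations are determined by the images
of three non-collinear points, so the order is at most `168`. By Sylow's theorems it is not `84`. -/

open Equiv MulAction

theorem mem_of_coprime_orderOf_index {G : Type*} [Group G] {N : Subgroup G} [N.Normal]
    {g : G} (h : (orderOf g).Coprime N.index) : g ∈ N := by
  rw [← QuotientGroup.eq_one_iff, ← orderOf_eq_one_iff]
  exact Nat.eq_one_of_dvd_coprimes h (orderOf_map_dvd (QuotientGroup.mk' N) g)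
    (orderOf_dvd_natCard _)

section PrimeDegree

variable {G α : Type*} [Group G] [MulAction G α] [FaithfulSMul G α]

theorem fixedPoints_ne_univ_of_ne_bot {N : Subgroup G} (hN : N ≠ ⊥) :
    fixedPoints N α ≠ Set.univ := by
  intro hfix
  refine hN ((Subgroup.eq_bot_iff_forall N).mpr fun g hg => ?_)
  refine FaithfulSMul.eq_of_smul_eq_smul (α := α) fun x => ?_
  have hx : x ∈ fixedPoints N α := hfix ▸ Set.mem_univ x
  rw [one_smul]
  exact hx ⟨g, hg⟩

theorem degree_dvd_natCard_of_normal [IsQuasiPreprimitive G α] [Nonempty α] {N : Subgroup G}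
    [N.Normal] (hN : N ≠ ⊥) : Nat.card α ∣ Nat.card N := by
  have : IsPretransitive N α :=
    IsQuasiPreprimitive.isPretransitive_of_normal (fixedPoints_ne_univ_of_ne_bot hN)
  obtain ⟨x⟩ := ‹Nonempty α›
  rw [← index_stabilizer_of_transitive N x]
  exact (stabilizer N x).index_dvd_card

theorem natCard_dvd_factorial_degree [Finite α] : Nat.card G ∣ (Nat.card α).factorial := by
  rw [← Nat.card_perm]
  exact Subgroup.card_dvd_of_injective (toPermHom G α) toPerm_injective

theorem not_sq_degree_dvd_natCard (hα : (Nat.card α).Prime) : ¬ Nat.card α ^ 2 ∣ Nat.card G := by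
  have : Finite α := Nat.finite_of_card_ne_zero hα.ne_zero
  intro hsq
  have hfact := hsq.trans (natCard_dvd_factorial_degree (G := G) (α := α))
  rw [← Nat.mul_factorial_pred hα.ne_zero, sq] at hfact
  have hle := hα.dvd_factorial.mp (Nat.dvd_of_mul_dvd_mul_left hα.pos hfact)
  have := hα.pos
  lia

theorem coprime_degree_index_of_normal [IsPretransitive G α] (hα : (Nat.card α).Prime)
    {N : Subgroup G} [N.Normal] (hN : N ≠ ⊥) : (Nat.card α).Coprime N.index := by
  have : Nonempty α := (Nat.card_pos_iff.mp hα.pos).1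
  have : IsPreprimitive G α := IsPreprimitive.of_prime_card hα
  refine hα.coprime_iff_not_dvd.mpr fun hindex => not_sq_degree_dvd_natCard (G := G) hα ?_
  rw [sq, ← N.card_mul_index]
  exact mul_dvd_mul (degree_dvd_natCard_of_normal hN) hindex

theorem isSimpleGroup_of_closure_orderOf_eq_degree [IsPretransitive G α]
    (hα : (Nat.card α).Prime) (hgen : Subgroup.closure {g : G | orderOf g = Nat.card α} = ⊤) :
    IsSimpleGroup G where
  exists_pair_ne := by
    have : Finite α := Nat.finite_of_card_ne_zero hα.ne_zero
    have : Nontrivial α := Finite.one_lt_card_iff_nontrivial.mp hα.one_lt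
    obtain ⟨x, y, hxy⟩ := exists_pair_ne α
    obtain ⟨g, rfl⟩ := exists_smul_eq G x y
    exact ⟨1, g, by rintro rfl; simp at hxy⟩
  eq_bot_or_eq_top_of_normal N _ := by
    refine or_iff_not_imp_left.mpr fun hN => top_le_iff.mp ?_
    rw [← hgen, Subgroup.closure_le]
    intro g (hg : orderOf g = Nat.card α)
    exact mem_of_coprime_orderOf_index (hg ▸ coprime_degree_index_of_normal hα hN)

end PrimeDegree

section PermPrimeDegree

variable {α : Type*}

theorem isPretransitive_of_orderOf_eq_degree (hα : (Nat.card α).Prime) {G : Subgroup (Perm α)}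
    {σ : Perm α} (hσG : σ ∈ G) (hσ : orderOf σ = Nat.card α) : IsPretransitive G α := by
  classical
  have : Finite α := Nat.finite_of_card_ne_zero hα.ne_zero
  have := Fintype.ofFinite α
  rw [Nat.card_eq_fintype_card] at hα hσ
  have hcycle : σ.IsCycle := Perm.isCycle_of_prime_order'' hα hσ
  have hsupport : σ.support = Finset.univ :=
    Finset.eq_univ_of_card _ (hcycle.orderOf.symm.trans hσ)
  have hmoved (x : α) : σ x ≠ x := Perm.mem_support.mp (hsupport ▸ Finset.mem_univ x)
  refine ⟨fun x y => ?_⟩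
  obtain ⟨i, hi⟩ := hcycle.exists_zpow_eq (hmoved x) (hmoved y)
  exact ⟨⟨σ ^ i, zpow_mem hσG i⟩, hi⟩

theorem isSimpleGroup_closure_of_orderOf_eq_degree (hα : (Nat.card α).Prime) {S : Set (Perm α)}
    (hS : S.Nonempty) (horder : ∀ σ ∈ S, orderOf σ = Nat.card α) :
    IsSimpleGroup (Subgroup.closure S) := by
  obtain ⟨σ, hσ⟩ := hS
  have := isPretransitive_of_orderOf_eq_degree hα (Subgroup.subset_closure hσ) (horder σ hσ)
  refine isSimpleGroup_of_closure_orderOf_eq_degree (α := α) hα (top_le_iff.mp ?_)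
  rw [← Subgroup.closure_closure_coe_preimage]
  exact Subgroup.closure_mono fun g hg => (Subgroup.orderOf_coe g).symm.trans (horder g hg)

end PermPrimeDegree

section Groups

variable {G : Type*} [Group G]

theorem not_isSimpleGroup_of_natCard_eq_pow_mul {p k m : ℕ} [hp : Fact p.Prime] (hk : k ≠ 0)
    (hpm : ¬ p ∣ m) (hm : m ≠ 1) (hdvd : ∀ d, d ∣ m → d ≡ 1 [MOD p] → d = 1)
    (hG : Nat.card G = p ^ k * m) : ¬ IsSimpleGroup G := by
  intro hsimple
  have hm0 : m ≠ 0 := by rintro rfl; exact hpm (dvd_zero p)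
  have hpk : p ^ k ≠ 0 := pow_ne_zero k hp.out.ne_zero
  have : Finite G := Nat.finite_of_card_ne_zero (hG ▸ mul_ne_zero hpk hm0)
  let P : Sylow p G := default
  have hcard : Nat.card P = p ^ k := by
    rw [P.card_eq_multiplicity, hG, Nat.factorization_mul hpk hm0]
    simp [hp.out.factorization_self, Nat.factorization_eq_zero_of_not_dvd hpm]
  have hindex : P.index = m := by
    have h := P.card_mul_index
    rw [hG] at h
    exact Nat.eq_of_mul_eq_mul_left (Nat.pos_of_ne_zero hpk) (hcard ▸ h)
  have hunique : Nat.card (Sylow p G) = 1 :=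
    hdvd _ (hindex ▸ P.card_dvd_index) (card_sylow_modEq_one p G)
  have : Subsingleton (Sylow p G) := (Nat.card_eq_one_iff_unique.mp hunique).1
  rcases P.normal_of_subsingleton.eq_bot_or_eq_top with hbot | htop
  · refine hk ((Nat.pow_eq_one.mp ?_).resolve_left hp.out.ne_one)
    rw [← hcard, hbot, Subgroup.card_bot]
  · exact hm (by rw [← hindex, htop, Subgroup.index_top])

theorem natCard_ne_eighty_four_of_isSimpleGroup [hsimple : IsSimpleGroup G] :
    Nat.card G ≠ 84 := by
  intro hG
  have : Fact (Nat.Prime 7) := ⟨by norm_num⟩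
  refine not_isSimpleGroup_of_natCard_eq_pow_mul (p := 7) (k := 1) (m := 12) one_ne_zero
    (by norm_num) (by norm_num) (fun d hd => ?_) hG hsimple
  have := Nat.le_of_dvd (by norm_num) hd
  revert hd
  interval_cases d <;> decide

theorem natCard_eq_of_isSimpleGroup [Finite G] [IsSimpleGroup G] (hdvd : 84 ∣ Nat.card G)
    (hle : Nat.card G ≤ 168) : Nat.card G = 168 := by
  have hne : Nat.card G ≠ 84 := natCard_ne_eighty_four_of_isSimpleGroup
  have hpos : 0 < Nat.card G := Nat.card_pos
  lia

theorem closure_mul_pow_pair (a b : G) (n : ℕ) :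
    Subgroup.closure {a * b ^ n, b} = Subgroup.closure {a, b} := by
  have hb (x : G) : b ∈ Subgroup.closure {x, b} := Subgroup.subset_closure (by simp)
  have hl (x : G) : x ∈ Subgroup.closure {x, b} := Subgroup.subset_closure (by simp)
  apply le_antisymm <;> rw [Subgroup.closure_le, Set.pair_subset_iff]
  · exact ⟨mul_mem (hl a) (pow_mem (hb a) n), hb a⟩
  · exact ⟨by simpa using mul_mem (hl (a * b ^ n)) (inv_mem (pow_mem (hb _) n)), hb _⟩

end Groups

section FanoPlane

/-- The third point on the line through `x` and `y` in the Fano plane whose lines are the translates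
of `{0, 2, 3}` modulo `7`, with `fanoThird x x = x`. The vector lists Zech logarithms: if `α` is a
root of `X ^ 3 + X ^ 2 + 1` over the field with two elements, then
`α ^ fanoThird x y = α ^ x + α ^ y` for `x ≠ y`. -/
def fanoThird (x y : Fin 7) : Fin 7 := x + ![0, 5, 3, 2, 6, 1, 4] (y - x)

/-- The collineation group of the Fano plane, encoded by preservation of `fanoThird`. -/
def fanoCollineations : Subgroup (Perm (Fin 7)) where
  carrier := {g | ∀ x y, g (fanoThird x y) = fanoThird (g x) (g y)}
  mul_mem' hg hh x y := by rw [Perm.mul_apply, hh, hg]; rfl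
  one_mem' _ _ := rfl
  inv_mem' hg x y := by rw [Perm.inv_eq_iff_eq, hg]; simp

theorem mem_fanoCollineations {g : Perm (Fin 7)} :
    g ∈ fanoCollineations ↔ ∀ x y, g (fanoThird x y) = fanoThird (g x) (g y) := Iff.rfl

/-- The ordered triples of non-collinear points of the Fano plane. -/
def fanoTriangles : Finset (Fin 7 × Fin 7 × Fin 7) :=
  {t | t.1 ≠ t.2.1 ∧ t.2.2 ≠ t.1 ∧ t.2.2 ≠ t.2.1 ∧ t.2.2 ≠ fanoThird t.1 t.2.1}

theorem card_fanoTriangles : fanoTriangles.card = 168 := by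
  decide +kernel

theorem image_mem_fanoTriangles {g : Perm (Fin 7)} (hg : g ∈ fanoCollineations) :
    (g 0, g 1, g 2) ∈ fanoTriangles := by
  rw [fanoTriangles, Finset.mem_filter_univ, ← hg]
  simp only [ne_eq, g.injective.eq_iff]
  decide

theorem fanoCollineations_ext {g h : Perm (Fin 7)} (hg : g ∈ fanoCollineations)
    (hh : h ∈ fanoCollineations) (h0 : g 0 = h 0) (h1 : g 1 = h 1) (h2 : g 2 = h 2) : g = h := by
  have agree {x y : Fin 7} (hx : g x = h x) (hy : g y = h y) :
      g (fanoThird x y) = h (fanoThird x y) := by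
    rw [hg, hh, hx, hy]
  have h5 : g 5 = h 5 := agree h0 h1
  have h3 : g 3 = h 3 := agree h0 h2
  have h6 : g 6 = h 6 := agree h1 h2
  have h4 : g 4 = h 4 := agree h0 h6
  ext x
  fin_cases x <;> simp [*]

theorem natCard_fanoCollineations_le : Nat.card fanoCollineations ≤ 168 := by
  let f (g : fanoCollineations) : fanoTriangles := ⟨_, image_mem_fanoTriangles g.2⟩
  have hf : Function.Injective f := by
    intro g h hgh
    obtain ⟨h0, h1, h2⟩ : g.1 0 = h.1 0 ∧ g.1 1 = h.1 1 ∧ g.1 2 = h.1 2 := by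
      simpa [f] using hgh
    exact Subtype.ext (fanoCollineations_ext g.2 h.2 h0 h1 h2)
  simpa [card_fanoTriangles] using Nat.card_le_card_of_injective f hf

theorem closure_pair_le_fanoCollineations :
    Subgroup.closure {swap 2 3 * swap 4 6, finRotate 7} ≤ fanoCollineations := by
  simp only [Subgroup.closure_le, Set.pair_subset_iff, SetLike.mem_coe, mem_fanoCollineations]
  decide

end FanoPlane

/-- The permutations `a = (3 4)(5 7)` and `b = (1 2 3 4 5 6 7)` of a
seven-element set (here realized on `Fin 7`, with labels shifted by one)
have orders 2 and 7, their product has order 4, and they generate a simple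
group of cardinality 168. -/
theorem fox_example_247 :
    let a : Equiv.Perm (Fin 7) := Equiv.swap 2 3 * Equiv.swap 4 6
    let b : Equiv.Perm (Fin 7) := finRotate 7
    orderOf a = 2 ∧ orderOf b = 7 ∧ orderOf (a * b) = 4 ∧
      IsSimpleGroup (Subgroup.closure {a, b}) ∧
      Nat.card (Subgroup.closure {a, b}) = 168 := by
  intro a b
  have : Fact (Nat.Prime 7) := ⟨by norm_num⟩
  have order_b : orderOf b = 7 := orderOf_eq_prime (by decide) (by decide)
  have order_ab : orderOf (a * b) = 4 :=
    orderOf_eq_prime_pow (p := 2) (n := 1) (by decide) (by decide)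
  have order_ab2 : orderOf (a * b ^ 2) = 3 := orderOf_eq_prime (by decide) (by decide)
  have order_ab3 : orderOf (a * b ^ 3) = 7 := orderOf_eq_prime (by decide +kernel) (by decide)
  have simple : IsSimpleGroup (Subgroup.closure {a, b}) := by
    rw [← closure_mul_pow_pair a b 3]
    exact isSimpleGroup_closure_of_orderOf_eq_degree (by norm_num) (Set.insert_nonempty _ _)
      (by simp [order_ab3, order_b])
  have dvd_card : 84 ∣ Nat.card (Subgroup.closure {a, b}) := by
    have ha : a ∈ Subgroup.closure {a, b} := Subgroup.subset_closure (by simp)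
    have hb : b ∈ Subgroup.closure {a, b} := Subgroup.subset_closure (by simp)
    have three_dvd := order_ab2 ▸ Subgroup.orderOf_dvd_natCard _ (mul_mem ha (pow_mem hb 2))
    have four_dvd := order_ab ▸ Subgroup.orderOf_dvd_natCard _ (mul_mem ha hb)
    have seven_dvd := order_b ▸ Subgroup.orderOf_dvd_natCard _ hb
    lia
  have card_le : Nat.card (Subgroup.closure {a, b}) ≤ 168 :=
    (Subgroup.card_le_of_le closure_pair_le_fanoCollineations).trans natCard_fanoCollineations_le
  exact ⟨orderOf_eq_prime (by decide) (by decide), order_b, order_ab, simple,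
    natCard_eq_of_isSimpleGroup dvd_card card_le⟩
end

section
/- The triangle group T(2,3,7) has a torsion-free normal subgroup N of index exactly 168 such that the quotient T(2,3,7)/N is a simple group (of order 168). -/
/-- Relator set of the triangle group `T(a,b,c)`: the relators `x^a`, `y^b`, `z^c`
and `x·y·z` in the free group on three generators `x, y, z`. -/
def TriangleRels (a b c : ℕ) : Set (FreeGroup (Fin 3)) :=
  {FreeGroup.of 0 ^ a, FreeGroup.of 1 ^ b, FreeGroup.of 2 ^ c,
    FreeGroup.of 0 * FreeGroup.of 1 * FreeGroup.of 2}

/-- The triangle group `T(a,b,c)`. -/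
abbrev TriangleGroup (a b c : ℕ) : Type :=
  PresentedGroup (TriangleRels a b c)

/-!
Let `W` be the Coxeter group generated by the reflections in the sides of a triangle with angles
`π/a`, `π/b`, `π/c` and `1/a + 1/b + 1/c < 1`. The triangle group `T(a,b,c)` embeds into `W` with
the generators going to products of two reflections. If `g ∈ W` has finite order, it fixes the sum
of the `⟨g⟩`-orbit of a dominant functional in the dual of the geometric representation. The sum
lies in the Tits cone, and it is nonzero because `W` has infinitely many positive roots. As
stabilizers of nonzero points of the Tits cone are conjugate into proper, hence dihedral, parabolic
subgroups, an element of finite order of `T(a,b,c)` is conjugate to a power of a generator.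
A homomorphism that preserves the orders of the generators thus has torsion-free kernel.

The modular group is generated by elements of orders `2` and `3` with parabolic product, and
reduction modulo a prime `p ≥ 7` makes the order of that product `p`. This gives a surjection of
`T(2,3,p)` onto the simple group `PSL(2,p)`, which has order `p (p² - 1) / 2`, that is `168` for
`p = 7`.
-/

namespace CoxeterGeometry

open CoxeterSystem Real

section CanonicalForm

variable {B : Type*}

/-- The height functional, equal to `1` on each simple root. -/
noncomputable def height [Fintype B] : Module.Dual ℝ (B → ℝ) := ∑ i, LinearMap.proj i

lemma height_apply [Fintype B] (v : B → ℝ) : height v = ∑ i, v i := by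
  simp [height]

lemma height_pos [Fintype B] {v : B → ℝ} (hv : 0 < v) : 0 < height v := by
  rw [height_apply]
  exact Fintype.sum_pos hv

variable [DecidableEq B]

/-- The simple root `αᵢ`, a standard basis vector of `B → ℝ`. -/
def simpleRoot (i : B) : B → ℝ := Pi.single i 1

lemma simpleRoot_nonneg (i : B) : 0 ≤ simpleRoot i :=
  Pi.single_nonneg.2 zero_le_one

lemma dual_apply_eq_sum [Fintype B] (q : Module.Dual ℝ (B → ℝ)) (v : B → ℝ) :
    q v = ∑ i, v i * q (simpleRoot i) := by
  conv_lhs => rw [pi_eq_sum_univ' v, map_sum]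
  simp only [map_smul, smul_eq_mul]
  congr!

lemma dual_apply_nonneg [Finite B] {q : Module.Dual ℝ (B → ℝ)}
    (hq : ∀ i, 0 ≤ q (simpleRoot i)) {v : B → ℝ} (hv : 0 ≤ v) : 0 ≤ q v := by
  have := Fintype.ofFinite B
  rw [dual_apply_eq_sum]
  exact Finset.sum_nonneg fun i _ ↦ mul_nonneg (hv i) (hq i)

variable [Fintype B]

lemma height_simpleRoot (i : B) : height (simpleRoot i) = 1 := by
  simp [height_apply, simpleRoot]

variable (M : CoxeterMatrix B)

/-- The canonical bilinear form of a Coxeter matrix, with Gram matrix `-cos (π / M i j)` on the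
simple roots. The convention `M i j = 0` for an infinite exponent gives the entry `-1`. -/
noncomputable def canonicalForm : LinearMap.BilinForm ℝ (B → ℝ) :=
  Matrix.toBilin' (Matrix.of fun i j ↦ -cos (π / M i j))

lemma canonicalForm_simpleRoot (i j : B) :
    canonicalForm M (simpleRoot i) (simpleRoot j) = -cos (π / M i j) := by
  simp [canonicalForm, simpleRoot, Matrix.toBilin'_single]

lemma canonicalForm_simpleRoot_self (i : B) :
    canonicalForm M (simpleRoot i) (simpleRoot i) = 1 := by
  simp [canonicalForm_simpleRoot]

lemma canonicalForm_comm (u v : B → ℝ) : canonicalForm M u v = canonicalForm M v u := by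
  simp only [canonicalForm, Matrix.toBilin'_apply, Matrix.of_apply]
  rw [Finset.sum_comm]
  refine Finset.sum_congr rfl fun i _ ↦ Finset.sum_congr rfl fun j _ ↦ ?_
  rw [M.symmetric i j]
  ring

lemma canonicalForm_eq_sum (u v : B → ℝ) :
    canonicalForm M u v = ∑ i, u i * canonicalForm M (simpleRoot i) v :=
  dual_apply_eq_sum ((canonicalForm M).flip v) u

/-- The reflection `v ↦ v - 2 B(αᵢ, v) αᵢ` in the simple root `αᵢ`. -/
noncomputable def simpleReflection (i : B) : (B → ℝ) ≃ₗ[ℝ] (B → ℝ) :=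
  Module.reflection (x := simpleRoot i) (f := (2 : ℝ) • canonicalForm M (simpleRoot i)) <| by
    simp [canonicalForm_simpleRoot_self]

lemma simpleReflection_apply (i : B) (v : B → ℝ) :
    simpleReflection M i v = v - (2 * canonicalForm M (simpleRoot i) v) • simpleRoot i := by
  simp [simpleReflection, Module.reflection_apply]

lemma simpleReflection_simpleRoot_self (i : B) :
    simpleReflection M i (simpleRoot i) = -simpleRoot i :=
  Module.reflection_apply_self _

lemma simpleReflection_simpleReflection (i : B) (v : B → ℝ) :
    simpleReflection M i (simpleReflection M i v) = v :=
  Module.involutive_reflection _ v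

lemma simpleReflection_apply_of_ne {i j : B} (h : j ≠ i) (v : B → ℝ) :
    simpleReflection M i v j = v j := by
  simp [simpleReflection_apply, simpleRoot, h]

lemma simpleReflection_eq_self {i : B} {v : B → ℝ} (h : canonicalForm M (simpleRoot i) v = 0) :
    simpleReflection M i v = v := by
  simp [simpleReflection_apply, h]

lemma canonicalForm_simpleReflection (i : B) (v : B → ℝ) :
    canonicalForm M (simpleReflection M i v) (simpleReflection M i v) = canonicalForm M v v := by
  simp only [simpleReflection_apply, map_sub, map_smul, LinearMap.sub_apply,
    LinearMap.smul_apply, smul_eq_mul, canonicalForm_simpleRoot_self,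
    canonicalForm_comm M v (simpleRoot i)]
  ring

end CanonicalForm

section DihedralPlane

variable {B : Type*} (M : CoxeterMatrix B)

lemma sin_pi_div_pos {i j : B} (hij : i ≠ j) (hM : M i j ≠ 0) : 0 < sin (π / M i j) := by
  have hne : M i j ≠ 1 := M.off_diagonal i j hij
  have hlt : (1 : ℝ) < M i j := by exact_mod_cast (show 1 < M i j by omega)
  exact sin_pos_of_pos_of_lt_pi (by positivity) (div_lt_self pi_pos hlt)

lemma sin_mul_div_sin_nonneg {i j : B} (hij : i ≠ j) (hM : M i j ≠ 0) {x : ℝ} (hx : 0 ≤ x)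
    (hx' : x ≤ M i j) : 0 ≤ sin (x * (π / M i j)) / sin (π / M i j) := by
  have hm : (0 : ℝ) < M i j := by exact_mod_cast Nat.pos_of_ne_zero hM
  refine div_nonneg (sin_nonneg_of_nonneg_of_le_pi (by positivity) ?_)
    (sin_pi_div_pos M hij hM).le
  calc x * (π / M i j) ≤ M i j * (π / M i j) := by gcongr
    _ = π := mul_div_cancel₀ π hm.ne'

variable [DecidableEq B]

/-- The unit vector at angle `x θ` from `αᵢ` in the plane of `αᵢ` and `αⱼ`, where
`θ = π / M i j` and `-αⱼ` is the vector with `x = -1`. -/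
noncomputable def dihedralRoot (i j : B) (x : ℝ) : B → ℝ :=
  (sin ((x + 1) * (π / M i j)) / sin (π / M i j)) • simpleRoot i +
    (sin (x * (π / M i j)) / sin (π / M i j)) • simpleRoot j

lemma dihedralRoot_add_two_mul {i j : B} (hM : M i j ≠ 0) (x : ℝ) :
    dihedralRoot M i j (x + 2 * M i j) = dihedralRoot M i j x := by
  have hm : (M i j : ℝ) ≠ 0 := by exact_mod_cast hM
  have period (y : ℝ) : sin ((y + 2 * M i j) * (π / M i j)) = sin (y * (π / M i j)) := by
    rw [← sin_add_two_pi (y * _)]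
    congr 1
    field_simp
  simp only [dihedralRoot, add_right_comm x _ 1, period]

lemma dihedralRoot_zero {i j : B} (hij : i ≠ j) (hM : M i j ≠ 0) :
    dihedralRoot M i j 0 = simpleRoot i := by
  simp [dihedralRoot, (sin_pi_div_pos M hij hM).ne']

lemma dihedralRoot_neg_one {i j : B} (hij : i ≠ j) (hM : M i j ≠ 0) :
    dihedralRoot M i j (-1) = -simpleRoot j := by
  simp [dihedralRoot, (sin_pi_div_pos M hij hM).ne']

variable [Fintype B]

lemma simpleReflection_dihedralRoot (i j : B) (x : ℝ) :
    simpleReflection M j (dihedralRoot M i j x) = dihedralRoot M j i (x + 1) := by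
  simp only [dihedralRoot, map_add, map_smul, simpleReflection_simpleRoot_self]
  rw [simpleReflection_apply, canonicalForm_simpleRoot, M.symmetric j i]
  set θ := π / (M i j : ℝ)
  have hsin : sin ((x + 1 + 1) * θ) = 2 * cos θ * sin ((x + 1) * θ) - sin (x * θ) := by
    rw [show (x + 1 + 1) * θ = (x + 1) * θ + θ by ring,
      show x * θ = (x + 1) * θ - θ by ring, sin_add, sin_sub]
    ring
  rw [hsin]
  module

lemma simpleReflection_mul_pow_dihedralRoot (i j : B) (x : ℝ) (n : ℕ) :
    ((simpleReflection M i * simpleReflection M j) ^ n) (dihedralRoot M i j x) =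
      dihedralRoot M i j (x + 2 * n) := by
  induction n with
  | zero => simp
  | succ n ih =>
    rw [pow_succ', LinearEquiv.mul_apply, ih, LinearEquiv.mul_apply,
      simpleReflection_dihedralRoot, simpleReflection_dihedralRoot]
    congr 1
    push_cast
    ring

lemma exists_eq_add_smul_simpleRoot {i j : B} (hij : i ≠ j) (hM : M i j ≠ 0) (v : B → ℝ) :
    ∃ (u : B → ℝ) (p q : ℝ), v = u + p • simpleRoot i + q • simpleRoot j ∧
      canonicalForm M (simpleRoot i) u = 0 ∧ canonicalForm M (simpleRoot j) u = 0 := by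
  set c := cos (π / M i j) with hc
  set a := canonicalForm M (simpleRoot i) v with ha
  set b := canonicalForm M (simpleRoot j) v with hb
  have hgram : 1 - c ^ 2 ≠ 0 := by
    rw [hc, ← sin_sq]
    exact pow_ne_zero 2 (sin_pi_div_pos M hij hM).ne'
  -- the Cramer rule for the Gram matrix of `αᵢ` and `αⱼ`
  set p := (a + c * b) / (1 - c ^ 2) with hp
  set q := (b + c * a) / (1 - c ^ 2) with hq
  refine ⟨v - p • simpleRoot i - q • simpleRoot j, p, q, by module, ?_, ?_⟩
  · simp only [map_sub, map_smul, smul_eq_mul, canonicalForm_simpleRoot_self,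
      canonicalForm_simpleRoot, ← ha, ← hc, hp, hq]
    field_simp
    ring
  · simp only [map_sub, map_smul, smul_eq_mul, canonicalForm_simpleRoot_self,
      canonicalForm_simpleRoot, M.symmetric j i, ← hb, ← hc, hp, hq]
    field_simp
    ring

lemma isLiftable_simpleReflection (hM : ∀ i j, M i j ≠ 0) :
    M.IsLiftable (simpleReflection M) := by
  intro i j
  rcases eq_or_ne i j with rfl | hij
  · ext1 v
    simp [simpleReflection_simpleReflection]
  set f := (simpleReflection M i * simpleReflection M j) ^ M i j with hf
  have hroot (x : ℝ) : f (dihedralRoot M i j x) = dihedralRoot M i j x := by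
    rw [hf, simpleReflection_mul_pow_dihedralRoot, dihedralRoot_add_two_mul _ (hM i j)]
  have hi : f (simpleRoot i) = simpleRoot i := by
    simpa only [dihedralRoot_zero M hij (hM i j)] using hroot 0
  have hj : f (simpleRoot j) = simpleRoot j := by
    simpa only [dihedralRoot_neg_one M hij (hM i j), map_neg, neg_inj] using hroot (-1)
  ext1 v
  obtain ⟨u, p, q, rfl, hui, huj⟩ := exists_eq_add_smul_simpleRoot M hij (hM i j) v
  have hu : f u = u := by
    have hfix : Function.IsFixedPt (simpleReflection M i * simpleReflection M j) u := by
      simp [Function.IsFixedPt, simpleReflection_eq_self, hui, huj]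
    rw [hf, LinearEquiv.coe_pow]
    exact hfix.iterate _
  simp only [map_add, map_smul, hu, hi, hj, LinearEquiv.coe_one, id]

end DihedralPlane

section GeometricRep

variable {B : Type*} {M : CoxeterMatrix B} {W : Type*} [Group W] (cs : CoxeterSystem M W)

lemma exists_eq_mul_alternatingWord (w : W) (i j : B) (hi : ¬cs.IsRightDescent w i) :
    ∃ (v : W) (k : ℕ), w = v * cs.wordProd (alternatingWord i j k) ∧
      cs.length w = cs.length v + k ∧ ¬cs.IsRightDescent v i ∧ ¬cs.IsRightDescent v j := by
  induction hn : cs.length w generalizing w i j with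
  | zero =>
    exact ⟨w, 0, by simp [alternatingWord], by simp [hn], hi,
      fun h ↦ by simp [IsRightDescent, hn] at h⟩
  | succ n ih =>
    by_cases hj : cs.IsRightDescent w j
    · have hlen := cs.isRightDescent_iff.1 hj
      obtain ⟨v, k, hw, hk, hvj, hvi⟩ := ih (w * cs.simple j) j i
        (cs.isRightDescent_iff_not_isRightDescent_mul.1 hj) (by omega)
      refine ⟨v, k + 1, ?_, by omega, hvi, hvj⟩
      rw [alternatingWord_succ, wordProd_concat, ← mul_assoc, ← hw,
        simple_mul_simple_cancel_right]
    · exact ⟨w, 0, by simp [alternatingWord], by simp [hn], hi, hj⟩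

lemma le_of_length_mul_wordProd_alternatingWord {v : W} {i j : B} {k : ℕ} (hM : M i j ≠ 0)
    (h : cs.length (v * cs.wordProd (alternatingWord i j k)) = cs.length v + k) :
    k ≤ M i j := by
  by_contra! hlt
  have hmul := cs.length_mul_le v (cs.wordProd (alternatingWord i j k))
  have hle := cs.length_wordProd_le (alternatingWord i j k)
  refine cs.not_isReduced_alternatingWord i j hM hlt ?_
  rw [CoxeterSystem.IsReduced]
  rw [length_alternatingWord] at hle ⊢
  omega

variable [Fintype B] [DecidableEq B] (hM : ∀ i j, M i j ≠ 0)

/-- The geometric representation of a Coxeter group all of whose exponents are finite. -/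
noncomputable def geometricRep : W →* ((B → ℝ) ≃ₗ[ℝ] (B → ℝ)) :=
  cs.lift ⟨simpleReflection M, isLiftable_simpleReflection M hM⟩

lemma geometricRep_simple (i : B) :
    geometricRep cs hM (cs.simple i) = simpleReflection M i :=
  cs.lift_apply_simple _ i

lemma geometricRep_mul_simple (w : W) (i : B) (v : B → ℝ) :
    geometricRep cs hM (w * cs.simple i) v = geometricRep cs hM w (simpleReflection M i v) := by
  rw [map_mul, geometricRep_simple, LinearEquiv.mul_apply]

lemma dualMap_geometricRep_mul (v w : W) (q : Module.Dual ℝ (B → ℝ)) :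
    (geometricRep cs hM (v * w)).dualMap q =
      (geometricRep cs hM w).dualMap ((geometricRep cs hM v).dualMap q) := by
  ext
  simp

lemma canonicalForm_geometricRep (w : W) (v : B → ℝ) :
    canonicalForm M (geometricRep cs hM w v) (geometricRep cs hM w v) = canonicalForm M v v := by
  induction w using cs.simple_induction_right generalizing v with
  | one => simp
  | mul_simple_right w i ih =>
    rw [geometricRep_mul_simple, ih, canonicalForm_simpleReflection]

lemma exists_geometricRep_alternatingWord {i j : B} (hij : i ≠ j) {k : ℕ} {x : ℝ} (hx : 0 ≤ x)
    (hk : x + k + 1 ≤ M i j) :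
    ∃ a b : ℝ, 0 ≤ a ∧ 0 ≤ b ∧
      geometricRep cs hM (cs.wordProd (alternatingWord i j k)) (dihedralRoot M i j x) =
        a • simpleRoot i + b • simpleRoot j := by
  induction k generalizing i j x with
  | zero =>
    refine ⟨_, _, sin_mul_div_sin_nonneg M hij (hM i j) (x := x + 1) (by linarith) ?_,
      sin_mul_div_sin_nonneg M hij (hM i j) hx ?_, by simp [alternatingWord, dihedralRoot]⟩ <;>
    · push_cast at hk
      linarith
  | succ k ih =>
    obtain ⟨a, b, ha, hb, h⟩ := ih hij.symm (x := x + 1) (by linarith) (by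
      rw [M.symmetric j i]
      push_cast at hk
      linarith)
    refine ⟨b, a, hb, ha, ?_⟩
    rw [alternatingWord_succ, wordProd_concat, geometricRep_mul_simple,
      simpleReflection_dihedralRoot, h, add_comm]

-- Split off from `w` its longest right factor in the dihedral group of `sᵢ` and a descent `sⱼ`:
-- that factor sends `αᵢ` to a positive root of the plane, and induction applies to the rest.
theorem geometricRep_simpleRoot_nonneg (w : W) (i : B) (hi : ¬cs.IsRightDescent w i) :
    0 ≤ geometricRep cs hM w (simpleRoot i) := by
  induction hn : cs.length w using Nat.strong_induction_on generalizing w i with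
  | _ n ih =>
    subst hn
    rcases eq_or_ne w 1 with rfl | hw
    · simpa using simpleRoot_nonneg i
    obtain ⟨j, hj⟩ := cs.exists_rightDescent_of_ne_one hw
    have hij : i ≠ j := by
      rintro rfl
      exact hi hj
    obtain ⟨v, k, hwv, hlen, hvi, hvj⟩ := exists_eq_mul_alternatingWord cs w i j hi
    have hk0 : k ≠ 0 := by
      rintro rfl
      rw [alternatingWord, wordProd_nil, mul_one] at hwv
      exact hvj (hwv ▸ hj)
    have hkM : k + 1 ≤ M i j := by
      rw [M.symmetric i j]
      refine le_of_length_mul_wordProd_alternatingWord cs (v := v) (hM j i) ?_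
      rw [alternatingWord_succ, wordProd_concat, ← mul_assoc, ← hwv,
        cs.not_isRightDescent_iff.1 hi, hlen, add_assoc]
    obtain ⟨a, b, ha, hb, hab⟩ := exists_geometricRep_alternatingWord cs hM hij (k := k)
      le_rfl (by rw [zero_add]; exact_mod_cast hkM)
    rw [dihedralRoot_zero M hij (hM i j)] at hab
    rw [hwv, map_mul, LinearEquiv.mul_apply, hab, map_add, map_smul, map_smul]
    exact add_nonneg (smul_nonneg ha (ih _ (by omega) v i hvi rfl))
      (smul_nonneg hb (ih _ (by omega) v j hvj rfl))

lemma geometricRep_simpleRoot_nonpos (w : W) (i : B) (hi : cs.IsRightDescent w i) :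
    geometricRep cs hM w (simpleRoot i) ≤ 0 := by
  have := geometricRep_simpleRoot_nonneg cs hM (w * cs.simple i) i
    (cs.isRightDescent_iff_not_isRightDescent_mul.1 hi)
  rwa [geometricRep_mul_simple, simpleReflection_simpleRoot_self, map_neg,
    Left.nonneg_neg_iff] at this

/-- The positive roots: nonnegative vectors in the orbits of the simple roots. -/
def positiveRoots : Set (B → ℝ) :=
  {β | (∃ w i, β = geometricRep cs hM w (simpleRoot i)) ∧ 0 ≤ β}

lemma simpleRoot_mem_positiveRoots (i : B) : simpleRoot i ∈ positiveRoots cs hM :=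
  ⟨⟨1, i, by simp⟩, simpleRoot_nonneg i⟩

variable {cs hM}

lemma canonicalForm_self_of_mem_positiveRoots {β : B → ℝ} (hβ : β ∈ positiveRoots cs hM) :
    canonicalForm M β β = 1 := by
  obtain ⟨⟨w, i, rfl⟩, -⟩ := hβ
  rw [canonicalForm_geometricRep, canonicalForm_simpleRoot_self]

lemma pos_of_mem_positiveRoots {β : B → ℝ} (hβ : β ∈ positiveRoots cs hM) : 0 < β := by
  refine lt_of_le_of_ne hβ.2 ?_
  rintro rfl
  simpa using canonicalForm_self_of_mem_positiveRoots hβ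

-- If `sᵢ β` is not positive then it is negative, and as `sᵢ` only changes the `i`-th coordinate,
-- `β` is a multiple of `αᵢ`.
lemma simpleReflection_mem_positiveRoots {β : B → ℝ} (hβ : β ∈ positiveRoots cs hM) {i : B}
    (hi : β ≠ simpleRoot i) : simpleReflection M i β ∈ positiveRoots cs hM := by
  have hself := canonicalForm_self_of_mem_positiveRoots hβ
  obtain ⟨⟨w, k, hw⟩, hpos⟩ := hβ
  have hroot : simpleReflection M i β = geometricRep cs hM (cs.simple i * w) (simpleRoot k) := by
    rw [map_mul, geometricRep_simple, LinearEquiv.mul_apply, ← hw]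
  refine ⟨⟨_, k, hroot⟩, ?_⟩
  by_cases hd : cs.IsRightDescent (cs.simple i * w) k
  · have hneg := geometricRep_simpleRoot_nonpos cs hM _ k hd
    rw [← hroot] at hneg
    have hβi : β = β i • simpleRoot i := by
      ext j
      rcases eq_or_ne j i with rfl | hj
      · simp [simpleRoot]
      · have h := hneg j
        rw [simpleReflection_apply_of_ne _ hj] at h
        simpa [simpleRoot, hj] using le_antisymm h (hpos j)
    have hsq : β i * β i = 1 := by
      rw [hβi] at hself
      simpa [canonicalForm_simpleRoot_self] using hself
    have hone : β i = 1 := by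
      have : 0 ≤ β i := hpos i
      nlinarith
    rw [hone, one_smul] at hβi
    exact absurd hβi hi
  · rw [hroot]
    exact geometricRep_simpleRoot_nonneg cs hM _ k hd

-- A positive root `β` of maximal height would satisfy `B(αᵢ, β) ≥ 0` for all `i`, whence
-- `0 ≤ B(u, β) = B(β, u) < 0`.
theorem infinite_positiveRoots_of_canonicalForm_neg [Nonempty B] {u : B → ℝ} (hu : 0 ≤ u)
    (hneg : ∀ i, canonicalForm M (simpleRoot i) u < 0) : (positiveRoots cs hM).Infinite := by
  intro hfin
  obtain ⟨β, hβ, hmax⟩ := Set.exists_max_image _ height hfin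
    ⟨_, simpleRoot_mem_positiveRoots cs hM (Classical.arbitrary B)⟩
  have hdom (i : B) : 0 ≤ canonicalForm M (simpleRoot i) β := by
    rcases eq_or_ne β (simpleRoot i) with rfl | h
    · simp [canonicalForm_simpleRoot_self]
    · have := hmax _ (simpleReflection_mem_positiveRoots hβ h)
      rw [simpleReflection_apply, map_sub, map_smul, height_simpleRoot, smul_eq_mul] at this
      linarith
  have hnonneg : 0 ≤ canonicalForm M u β := by
    rw [canonicalForm_eq_sum]
    exact Finset.sum_nonneg fun i _ ↦ mul_nonneg (hu i) (hdom i)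
  obtain ⟨hβ0, i, hi⟩ := Pi.lt_def.1 (pos_of_mem_positiveRoots hβ)
  refine hnonneg.not_gt ?_
  rw [canonicalForm_comm, canonicalForm_eq_sum]
  exact Finset.sum_neg' (fun j _ ↦ mul_nonpos_of_nonneg_of_nonpos (hβ0 j) (hneg j).le)
    ⟨i, Finset.mem_univ i, mul_neg_of_pos_of_neg hi (hneg i)⟩

end GeometricRep

section TitsCone

variable {B : Type*} [Fintype B] [DecidableEq B] {M : CoxeterMatrix B} {W : Type*} [Group W]
  (cs : CoxeterSystem M W) (hM : ∀ i j, M i j ≠ 0)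

/-- The positive roots on which a functional is negative. -/
def negativeRoots (q : Module.Dual ℝ (B → ℝ)) : Set (B → ℝ) :=
  {β ∈ positiveRoots cs hM | q β < 0}

/-- The Tits cone in the dual of the geometric representation, described as the set of functionals
negative on only finitely many positive roots. -/
def titsCone : AddSubmonoid (Module.Dual ℝ (B → ℝ)) where
  carrier := {q | (negativeRoots cs hM q).Finite}
  zero_mem' := by simp [negativeRoots]
  add_mem' {p q} hp hq := by
    refine (hp.union hq).subset fun β ⟨hβ, hneg⟩ ↦ ?_
    rcases lt_or_ge (p β) 0 with h | h
    · exact Or.inl ⟨hβ, h⟩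
    · exact Or.inr ⟨hβ, by rw [LinearMap.add_apply] at hneg; linarith⟩

lemma height_mem_titsCone : height ∈ titsCone cs hM := by
  refine Set.finite_empty.subset fun β ⟨hβ, hneg⟩ ↦ ?_
  exact hneg.not_gt (height_pos (pos_of_mem_positiveRoots hβ))

variable {cs hM}

lemma neg_height_notMem_titsCone (hinf : (positiveRoots cs hM).Infinite) :
    -height ∉ titsCone cs hM := fun h ↦
  hinf <| h.subset fun _ hβ ↦ ⟨hβ, neg_neg_of_pos (height_pos (pos_of_mem_positiveRoots hβ))⟩

lemma simpleReflection_mem_negativeRoots {q : Module.Dual ℝ (B → ℝ)} {i : B} {β : B → ℝ}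
    (hβ : β ∈ negativeRoots cs hM ((simpleReflection M i).dualMap q)) (hi : β ≠ simpleRoot i) :
    simpleReflection M i β ∈ negativeRoots cs hM q :=
  ⟨simpleReflection_mem_positiveRoots hβ.1 hi, hβ.2⟩

lemma dualMap_simpleReflection_mem_titsCone {q : Module.Dual ℝ (B → ℝ)}
    (hq : q ∈ titsCone cs hM) (i : B) : (simpleReflection M i).dualMap q ∈ titsCone cs hM := by
  refine ((hq.image (simpleReflection M i)).insert (simpleRoot i)).subset fun β hβ ↦ ?_
  rcases eq_or_ne β (simpleRoot i) with h | h
  · exact Or.inl h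
  · exact Or.inr ⟨_, simpleReflection_mem_negativeRoots hβ h,
      simpleReflection_simpleReflection M i β⟩

lemma dualMap_geometricRep_mem_titsCone {q : Module.Dual ℝ (B → ℝ)}
    (hq : q ∈ titsCone cs hM) (w : W) : (geometricRep cs hM w).dualMap q ∈ titsCone cs hM := by
  induction w using cs.simple_induction_right with
  | one =>
    convert hq
    ext
    simp
  | mul_simple_right w i ih =>
    rw [dualMap_geometricRep_mul, geometricRep_simple]
    exact dualMap_simpleReflection_mem_titsCone ih i

lemma ncard_negativeRoots_dualMap_simpleReflection_lt {q : Module.Dual ℝ (B → ℝ)}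
    (hq : q ∈ titsCone cs hM) {i : B} (hi : q (simpleRoot i) < 0) :
    (negativeRoots cs hM ((simpleReflection M i).dualMap q)).ncard <
      (negativeRoots cs hM q).ncard := by
  have hne : ∀ β ∈ negativeRoots cs hM ((simpleReflection M i).dualMap q), β ≠ simpleRoot i := by
    rintro _ ⟨-, h⟩ rfl
    rw [LinearEquiv.dualMap_apply, simpleReflection_simpleRoot_self, map_neg] at h
    linarith
  rw [← Set.ncard_image_of_injective _ (simpleReflection M i).injective]
  refine Set.ncard_lt_ncard ⟨?_, fun hsub ↦ ?_⟩ hq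
  · rintro _ ⟨β, hβ, rfl⟩
    exact simpleReflection_mem_negativeRoots hβ (hne β hβ)
  · obtain ⟨β, hβ, h⟩ := hsub ⟨simpleRoot_mem_positiveRoots cs hM i, hi⟩
    have hβi : β = -simpleRoot i := by
      rw [← simpleReflection_simpleReflection M i β, h, simpleReflection_simpleRoot_self]
    refine (pos_of_mem_positiveRoots hβ.1).not_ge ?_
    rw [hβi]
    exact neg_nonpos.2 (simpleRoot_nonneg i)

theorem exists_forall_nonneg_of_mem_titsCone {q : Module.Dual ℝ (B → ℝ)}
    (hq : q ∈ titsCone cs hM) :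
    ∃ w, ∀ i, 0 ≤ (geometricRep cs hM w).dualMap q (simpleRoot i) := by
  induction hn : (negativeRoots cs hM q).ncard using Nat.strong_induction_on generalizing q with
  | _ n ih =>
    subst hn
    by_cases! hdom : ∀ i, 0 ≤ q (simpleRoot i)
    · exact ⟨1, by simpa using hdom⟩
    obtain ⟨i, hi⟩ := hdom
    obtain ⟨w, hw⟩ := ih _ (ncard_negativeRoots_dualMap_simpleReflection_lt hq hi)
      (dualMap_simpleReflection_mem_titsCone hq i) rfl
    refine ⟨cs.simple i * w, ?_⟩
    rwa [dualMap_geometricRep_mul, geometricRep_simple]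

theorem mem_closure_of_dualMap_geometricRep_eq {q : Module.Dual ℝ (B → ℝ)}
    (hq : ∀ i, 0 ≤ q (simpleRoot i)) {w : W} (hw : (geometricRep cs hM w).dualMap q = q) :
    w ∈ Subgroup.closure (cs.simple '' {i | q (simpleRoot i) = 0}) := by
  induction hn : cs.length w using Nat.strong_induction_on generalizing w with
  | _ n ih =>
    subst hn
    rcases eq_or_ne w 1 with rfl | hw1
    · exact one_mem _
    obtain ⟨i, hi⟩ := cs.exists_rightDescent_of_ne_one hw1
    have hzero : q (simpleRoot i) = 0 := by
      refine le_antisymm ?_ (hq i)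
      have hnonneg := dual_apply_nonneg hq
        (neg_nonneg.2 (geometricRep_simpleRoot_nonpos cs hM w i hi))
      rw [map_neg, ← LinearEquiv.dualMap_apply, hw] at hnonneg
      linarith
    have hws : w * cs.simple i ∈ Subgroup.closure (cs.simple '' {i | q (simpleRoot i) = 0}) := by
      refine ih _ hi ?_ rfl
      rw [dualMap_geometricRep_mul, hw, geometricRep_simple]
      refine LinearMap.ext fun v ↦ ?_
      simp [simpleReflection_apply, hzero]
    rw [← cs.simple_mul_simple_cancel_right (w := w) i]
    exact mul_mem hws (Subgroup.subset_closure ⟨i, hzero, rfl⟩)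

-- The fixed functional is the sum of the orbit of the height. Were it zero, `-height` would be a
-- sum of elements of the Tits cone.
theorem exists_ne_zero_mem_titsCone_dualMap_eq (hinf : (positiveRoots cs hM).Infinite) {g : W}
    (hg : IsOfFinOrder g) :
    ∃ p ∈ titsCone cs hM, p ≠ 0 ∧ (geometricRep cs hM g).dualMap p = p := by
  let q (k : ℕ) : Module.Dual ℝ (B → ℝ) := (geometricRep cs hM (g ^ k)).dualMap height
  have hq (k : ℕ) : q k ∈ titsCone cs hM :=
    dualMap_geometricRep_mem_titsCone (height_mem_titsCone cs hM) _
  have hq0 : q 0 = height := by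
    ext
    simp [q]
  obtain ⟨n, hn⟩ := Nat.exists_eq_succ_of_ne_zero hg.orderOf_pos.ne'
  have hgn : g ^ (n + 1) = 1 := by rw [← Nat.succ_eq_add_one, ← hn, pow_orderOf_eq_one]
  refine ⟨∑ k ∈ Finset.range (n + 1), q k, sum_mem fun k _ ↦ hq k, fun hp ↦ ?_, ?_⟩
  · refine neg_height_notMem_titsCone hinf ?_
    rw [Finset.sum_range_succ', hq0] at hp
    rw [← eq_neg_of_add_eq_zero_left hp]
    exact sum_mem fun k _ ↦ hq _
  · have hstep (k : ℕ) : (geometricRep cs hM g).dualMap (q k) = q (k + 1) := by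
      simp only [q, pow_succ, dualMap_geometricRep_mul]
    rw [map_sum]
    simp only [hstep]
    rw [Finset.sum_range_succ, Finset.sum_range_succ' q]
    simp only [q, hgn, pow_zero]

theorem exists_conj_mem_closure_of_isOfFinOrder (hinf : (positiveRoots cs hM).Infinite) {g : W}
    (hg : IsOfFinOrder g) :
    ∃ (w : W) (i : B), w⁻¹ * g * w ∈ Subgroup.closure (cs.simple '' {j | j ≠ i}) := by
  obtain ⟨p, hp, hp0, hpg⟩ := exists_ne_zero_mem_titsCone_dualMap_eq hinf hg
  obtain ⟨w, hw⟩ := exists_forall_nonneg_of_mem_titsCone hp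
  have hfix : (geometricRep cs hM (w⁻¹ * g * w)).dualMap ((geometricRep cs hM w).dualMap p) =
      (geometricRep cs hM w).dualMap p := by
    rw [← dualMap_geometricRep_mul, mul_assoc, mul_inv_cancel_left, dualMap_geometricRep_mul, hpg]
  obtain ⟨i, hi⟩ : ∃ i, (geometricRep cs hM w).dualMap p (simpleRoot i) ≠ 0 := by
    by_contra! h
    refine hp0 ((geometricRep cs hM w).dualMap.map_eq_zero_iff.1 (LinearMap.ext fun v ↦ ?_))
    rw [dual_apply_eq_sum]
    simp [h]
  refine ⟨w, i, Subgroup.closure_mono (Set.image_mono fun j hj ↦ ?_)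
    (mem_closure_of_dualMap_geometricRep_eq hw hfix)⟩
  rintro rfl
  exact hi hj

end TitsCone

section RankThree

lemma sin_lt_cos_mul_sin_add_cos_mul_sin {x x' y y' z : ℝ} (hx : 0 ≤ x) (hxx' : x < x')
    (hy : 0 ≤ y) (hyy' : y < y') (hz : 0 < z) (hsum : x' + y' + z = π) :
    sin z < cos x * sin y' + cos y * sin x' := by
  have hcosx : cos x' < cos x := cos_lt_cos_of_nonneg_of_le_pi hx (by linarith) hxx'
  have hcosy : cos y' < cos y := cos_lt_cos_of_nonneg_of_le_pi hy (by linarith) hyy'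
  have hsinx : 0 < sin x' := sin_pos_of_pos_of_lt_pi (by linarith) (by linarith)
  have hsiny : 0 < sin y' := sin_pos_of_pos_of_lt_pi (by linarith) (by linarith)
  calc sin z = sin (x' + y') := by rw [← sin_pi_sub, ← hsum, add_sub_cancel_right]
    _ = cos x' * sin y' + cos y' * sin x' := by rw [sin_add]; ring
    _ < cos x * sin y' + cos y * sin x' := by gcongr

-- Enlarge the three angles equally until they are those of a Euclidean triangle, and take for `u`
-- the side lengths of that triangle.
lemma exists_canonicalForm_neg {M : CoxeterMatrix (Fin 3)}
    (hM : (M 0 1 : ℝ)⁻¹ + (M 1 2 : ℝ)⁻¹ + (M 2 0 : ℝ)⁻¹ < 1) :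
    ∃ u : Fin 3 → ℝ, 0 ≤ u ∧ ∀ i, canonicalForm M (simpleRoot i) u < 0 := by
  set a := π / M 0 1 with ha
  set b := π / M 1 2 with hb
  set c := π / M 2 0 with hc
  have ha0 : 0 ≤ a := by positivity
  have hb0 : 0 ≤ b := by positivity
  have hc0 : 0 ≤ c := by positivity
  have hsum : a + b + c < π := by
    calc a + b + c = π * ((M 0 1 : ℝ)⁻¹ + (M 1 2 : ℝ)⁻¹ + (M 2 0 : ℝ)⁻¹) := by
          simp only [ha, hb, hc]; ring
      _ < π * 1 := by gcongr
      _ = π := mul_one π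
  obtain ⟨ε, hε, hεsum⟩ : ∃ ε > 0, (a + ε) + (b + ε) + (c + ε) = π :=
    ⟨(π - (a + b + c)) / 3, by linarith, by ring⟩
  have hab := sin_lt_cos_mul_sin_add_cos_mul_sin (z := c + ε) ha0 (lt_add_of_pos_right a hε) hb0
    (lt_add_of_pos_right b hε) (by linarith) hεsum
  have hbc := sin_lt_cos_mul_sin_add_cos_mul_sin (z := a + ε) hb0 (lt_add_of_pos_right b hε) hc0
    (lt_add_of_pos_right c hε) (by linarith) (by linarith)
  have hca := sin_lt_cos_mul_sin_add_cos_mul_sin (z := b + ε) hc0 (lt_add_of_pos_right c hε) ha0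
    (lt_add_of_pos_right a hε) (by linarith) (by linarith)
  refine ⟨![sin (b + ε), sin (c + ε), sin (a + ε)], fun i ↦ ?_, fun i ↦ ?_⟩
  · fin_cases i <;> exact sin_nonneg_of_nonneg_of_le_pi (by linarith) (by linarith)
  · rw [canonicalForm_comm, canonicalForm_eq_sum, Fin.sum_univ_three]
    fin_cases i <;>
      simp only [Fin.zero_eta, Fin.mk_one, Fin.reduceFinMk, canonicalForm_simpleRoot,
        CoxeterMatrix.diagonal, Nat.cast_one, div_one, cos_pi, neg_neg, mul_one, ← ha, ← hb, ← hc,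
        M.symmetric 1 0, M.symmetric 2 1, M.symmetric 0 2, Matrix.cons_val] <;>
      linarith

end RankThree

end CoxeterGeometry

lemma mem_zpowers_or_mul_mem_zpowers_of_mem_closure_pair {G : Type*} [Group G] {a b g : G}
    (ha : a * a = 1) (hb : b * b = 1) (hg : g ∈ Subgroup.closure {a, b}) :
    g ∈ Subgroup.zpowers (a * b) ∨ g * a ∈ Subgroup.zpowers (a * b) := by
  have ha' : a⁻¹ = a := inv_eq_of_mul_eq_one_left ha
  have hb' : b⁻¹ = b := inv_eq_of_mul_eq_one_left hb
  have hmul (x : G) (hx : x ∈ Subgroup.zpowers (a * b) ∨ x * a ∈ Subgroup.zpowers (a * b)) (y : G)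
      (hy : y ∈ ({a, b} : Set G)) :
      x * y ∈ Subgroup.zpowers (a * b) ∨ x * y * a ∈ Subgroup.zpowers (a * b) := by
    obtain rfl | rfl := hy
    · simpa only [mul_assoc, ha, mul_one] using hx.symm
    · have hxb : x * a * (a * y) = x * y := by rw [mul_assoc, ← mul_assoc a, ha, one_mul]
      have hxba : x * (a * y)⁻¹ = x * y * a := by rw [mul_inv_rev, ha', hb', mul_assoc]
      rw [← hxba, ← hxb]
      exact hx.symm.imp (mul_mem · (Subgroup.mem_zpowers _))
        (mul_mem · (inv_mem (Subgroup.mem_zpowers _)))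
  induction hg using Subgroup.closure_induction_right with
  | one => exact Or.inl (one_mem _)
  | mul_right x _ y hy ih => exact hmul x ih y hy
  | mul_inv_cancel x _ y hy ih =>
    have hy' : y⁻¹ = y := by obtain rfl | rfl := hy <;> assumption
    rw [hy']
    exact hmul x ih y hy

namespace TriangleGroup

open PresentedGroup CoxeterGeometry

section Relations

variable {a b c : ℕ}

lemma of_pow (i : Fin 3) : (of i : TriangleGroup a b c) ^ ![a, b, c] i = 1 := by
  refine one_of_mem (x := FreeGroup.of i ^ ![a, b, c] i) ?_
  fin_cases i <;> simp [TriangleRels]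

lemma of_mul_of_mul_of : (of 0 * of 1 * of 2 : TriangleGroup a b c) = 1 :=
  one_of_mem (x := FreeGroup.of 0 * FreeGroup.of 1 * FreeGroup.of 2) (by simp [TriangleRels])

lemma of_two_eq : (of 2 : TriangleGroup a b c) = (of 1)⁻¹ * (of 0)⁻¹ := by
  rw [← mul_inv_rev]
  exact eq_inv_of_mul_eq_one_right of_mul_of_mul_of

lemma of_one_mul_of_zero_pow : (of 1 * of 0 : TriangleGroup a b c) ^ c = 1 := by
  have hconj : (of 1 * of 0 : TriangleGroup a b c) = (of 0)⁻¹ * (of 2)⁻¹ * (of 0)⁻¹⁻¹ := by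
    rw [of_two_eq]
    group
  have hpow : (of 2 : TriangleGroup a b c) ^ c = 1 := of_pow 2
  rw [hconj, conj_pow, inv_pow, hpow]
  simp

/-- The homomorphism out of a triangle group determined by the images of its generators. -/
def lift {G : Type*} [Group G] (f : Fin 3 → G) (hpow : ∀ i, f i ^ ![a, b, c] i = 1)
    (hprod : f 0 * f 1 * f 2 = 1) : TriangleGroup a b c →* G :=
  toGroup (f := f) <| by
    rintro r (rfl | rfl | rfl | rfl)
    · simpa using hpow 0
    · simpa using hpow 1
    · simpa using hpow 2
    · simpa using hprod

lemma lift_of {G : Type*} [Group G] {f : Fin 3 → G} (hpow : ∀ i, f i ^ ![a, b, c] i = 1)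
    (hprod : f 0 * f 1 * f 2 = 1) (i : Fin 3) : lift f hpow hprod (of i) = f i :=
  toGroup.of _

/-- The involution of a triangle group given by conjugation with the reflection in the side joining
the fixed points of the first two generators. -/
def reflectionHom (a b c : ℕ) : TriangleGroup a b c →* TriangleGroup a b c :=
  lift ![(of 0)⁻¹, (of 1)⁻¹, of 1 * of 0]
    (by
      intro i
      fin_cases i
      · simpa using of_pow 0
      · simpa using of_pow 1
      · exact of_one_mul_of_zero_pow)
    (by simp [mul_assoc])

lemma reflectionHom_of (i : Fin 3) :
    reflectionHom a b c (of i) = (![(of 0)⁻¹, (of 1)⁻¹, of 1 * of 0] : Fin 3 → _) i :=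
  lift_of _ _ i

lemma reflectionHom_involutive : Function.Involutive (reflectionHom a b c) := by
  suffices h : (reflectionHom a b c).comp (reflectionHom a b c) = MonoidHom.id _ from
    DFunLike.congr_fun h
  ext i
  fin_cases i <;> simp [reflectionHom_of, of_two_eq]

/-- The permutations of a triangle group by which the simple reflections of its Coxeter group act:
the three reflections in the sides, each a left translation composed with `reflectionHom`. -/
def reflectionAction (a b c : ℕ) : Fin 3 → Equiv.Perm (TriangleGroup a b c) :=
  ![MulAction.toPerm (of 0 : TriangleGroup a b c) * reflectionHom_involutive.toPerm,
    reflectionHom_involutive.toPerm,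
    reflectionHom_involutive.toPerm * MulAction.toPerm (of 1 : TriangleGroup a b c)]

lemma reflectionAction_mul_self (i : Fin 3) :
    reflectionAction a b c i * reflectionAction a b c i = 1 := by
  ext1 g
  fin_cases i <;> simp [reflectionAction, reflectionHom_of, reflectionHom_involutive g]

lemma reflectionAction_mul_succ (i : Fin 3) :
    reflectionAction a b c i * reflectionAction a b c (i + 1) =
      MulAction.toPermHom (TriangleGroup a b c) _ (of i) := by
  ext1 g
  fin_cases i <;>
    simp [reflectionAction, reflectionHom_of, reflectionHom_involutive g, of_two_eq, mul_assoc]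

end Relations

section CoxeterGroup

variable {M : CoxeterMatrix (Fin 3)}

lemma isLiftable_of_mul_succ_pow {G : Type*} [Group G] {f : Fin 3 → G}
    (hsq : ∀ i, f i * f i = 1) (hrot : ∀ i, (f i * f (i + 1)) ^ M i (i + 1) = 1) :
    M.IsLiftable f := by
  have hinv (i : Fin 3) : (f i)⁻¹ = f i := inv_eq_of_mul_eq_one_left (hsq i)
  have hcases : ∀ i j : Fin 3, j = i ∨ j = i + 1 ∨ i = j + 1 := by decide
  intro i j
  obtain rfl | rfl | rfl := hcases i j
  · rw [hsq, one_pow]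
  · exact hrot i
  · rw [M.symmetric, ← inv_inj, ← inv_pow, mul_inv_rev, hinv, hinv, hrot, inv_one]

lemma coxeterMatrix_apply_succ (i : Fin 3) : M i (i + 1) = ![M 0 1, M 1 2, M 2 0] i := by
  fin_cases i <;> rfl

lemma isLiftable_reflectionAction :
    M.IsLiftable (reflectionAction (M 0 1) (M 1 2) (M 2 0)) := by
  refine isLiftable_of_mul_succ_pow reflectionAction_mul_self fun i ↦ ?_
  rw [reflectionAction_mul_succ, ← map_pow, coxeterMatrix_apply_succ, of_pow, map_one]

variable {W : Type*} [Group W] (cs : CoxeterSystem M W)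

/-- The homomorphism from a triangle group to the Coxeter group of the corresponding triangle,
sending the generators to the products of adjacent simple reflections. -/
def toCoxeterGroup : TriangleGroup (M 0 1) (M 1 2) (M 2 0) →* W :=
  lift (fun i ↦ cs.simple i * cs.simple (i + 1))
    (fun i ↦ by rw [← coxeterMatrix_apply_succ]; exact cs.simple_mul_simple_pow i (i + 1))
    (by simp [mul_assoc])

lemma toCoxeterGroup_of (i : Fin 3) :
    toCoxeterGroup cs (of i) = cs.simple i * cs.simple (i + 1) :=
  lift_of _ _ i

-- The Coxeter group acts on the triangle group by permutations, extending left translation.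
lemma toCoxeterGroup_injective : Function.Injective (toCoxeterGroup cs) := by
  let act := cs.lift ⟨_, isLiftable_reflectionAction⟩
  have hact : act.comp (toCoxeterGroup cs) = MulAction.toPermHom _ _ := by
    ext1 i
    rw [MonoidHom.comp_apply, toCoxeterGroup_of, map_mul, cs.lift_apply_simple,
      cs.lift_apply_simple, reflectionAction_mul_succ]
  refine Function.Injective.of_comp (f := act) ?_
  rw [← MonoidHom.coe_comp, hact]
  exact MulAction.toPerm_injective

lemma lengthParity_toCoxeterGroup (g : TriangleGroup (M 0 1) (M 1 2) (M 2 0)) :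
    cs.lengthParity (toCoxeterGroup cs g) = 1 := by
  suffices h : cs.lengthParity.comp (toCoxeterGroup cs) = 1 from DFunLike.congr_fun h g
  ext1 i
  rw [MonoidHom.comp_apply, toCoxeterGroup_of, map_mul, cs.lengthParity_simple,
    cs.lengthParity_simple]
  rfl

lemma simple_mul_simple_mem_range (i j : Fin 3) :
    cs.simple i * cs.simple j ∈ (toCoxeterGroup cs).range := by
  have hcases : ∀ i j : Fin 3, j = i ∨ j = i + 1 ∨ i = j + 1 := by decide
  obtain rfl | rfl | rfl := hcases i j
  · rw [cs.simple_mul_simple_self]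
    exact one_mem _
  · exact ⟨of i, toCoxeterGroup_of cs i⟩
  · exact ⟨(of j)⁻¹, by rw [map_inv, toCoxeterGroup_of, mul_inv_rev, cs.inv_simple, cs.inv_simple]⟩

lemma mem_range_or_mul_simple_mem_range (w : W) (i : Fin 3) :
    w ∈ (toCoxeterGroup cs).range ∨ w * cs.simple i ∈ (toCoxeterGroup cs).range := by
  induction w using cs.simple_induction_right with
  | one => exact Or.inl (one_mem _)
  | mul_simple_right w j ih =>
    rcases ih with h | h
    · right
      rw [mul_assoc]
      exact mul_mem h (simple_mul_simple_mem_range cs j i)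
    · left
      have := mul_mem h (simple_mul_simple_mem_range cs i j)
      rwa [mul_assoc, cs.simple_mul_simple_cancel_left] at this

lemma mem_zpowers_of_mem_closure_of_lengthParity {i : Fin 3} {w : W}
    (hw : w ∈ Subgroup.closure (cs.simple '' {j | j ≠ i})) (heven : cs.lengthParity w = 1) :
    w ∈ Subgroup.zpowers (cs.simple (i + 1) * cs.simple (i + 1 + 1)) := by
  have hsub : cs.simple '' {j | j ≠ i} ⊆ {cs.simple (i + 1), cs.simple (i + 1 + 1)} := by
    rintro _ ⟨j, hj, rfl⟩
    have hcases : ∀ i j : Fin 3, j ≠ i → j = i + 1 ∨ j = i + 1 + 1 := by decide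
    obtain rfl | rfl := hcases i j hj <;> simp
  refine (mem_zpowers_or_mul_mem_zpowers_of_mem_closure_pair (cs.simple_mul_simple_self _)
    (cs.simple_mul_simple_self _) (Subgroup.closure_mono hsub hw)).resolve_right fun h ↦ ?_
  rw [← toCoxeterGroup_of, ← MonoidHom.map_zpowers] at h
  obtain ⟨t, -, ht⟩ := h
  have hodd := lengthParity_toCoxeterGroup cs t
  rw [ht, map_mul, heven, cs.lengthParity_simple] at hodd
  exact absurd hodd (by decide)

lemma exists_conj_mem_zpowers_of_conj_mem_zpowers
    {g : TriangleGroup (M 0 1) (M 1 2) (M 2 0)} {w : W} {i : Fin 3}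
    (h : w⁻¹ * toCoxeterGroup cs g * w ∈ Subgroup.zpowers (cs.simple i * cs.simple (i + 1))) :
    ∃ t, t⁻¹ * g * t ∈ Subgroup.zpowers (of i) := by
  have hdescend (t : TriangleGroup (M 0 1) (M 1 2) (M 2 0))
      (ht : (toCoxeterGroup cs t)⁻¹ * toCoxeterGroup cs g * toCoxeterGroup cs t ∈
        Subgroup.zpowers (cs.simple i * cs.simple (i + 1))) :
      t⁻¹ * g * t ∈ Subgroup.zpowers (of i) := by
    rwa [← map_inv, ← map_mul, ← map_mul, ← toCoxeterGroup_of, ← MonoidHom.map_zpowers,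
      Subgroup.mem_map_iff_mem (toCoxeterGroup_injective cs)] at ht
  obtain ⟨t, rfl⟩ | ⟨t, ht⟩ := mem_range_or_mul_simple_mem_range cs w i
  · exact ⟨t, hdescend t h⟩
  · refine ⟨t, hdescend t ?_⟩
    obtain ⟨n, hn⟩ := Subgroup.mem_zpowers_iff.1 h
    refine Subgroup.mem_zpowers_iff.2 ⟨-n, ?_⟩
    have hinv : (cs.simple i * cs.simple (i + 1))⁻¹ =
        cs.simple i * (cs.simple i * cs.simple (i + 1)) * (cs.simple i)⁻¹ := by
      simp
    rw [zpow_neg, ← inv_zpow, hinv, conj_zpow, hn, ht]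
    simp [mul_assoc]

lemma exists_coxeterMatrix {a b c : ℕ} (ha : a ≠ 1) (hb : b ≠ 1) (hc : c ≠ 1) :
    ∃ M : CoxeterMatrix (Fin 3), M 0 1 = a ∧ M 1 2 = b ∧ M 2 0 = c := by
  refine ⟨⟨!![1, a, c; a, 1, b; c, b, 1], ?_, ?_, ?_⟩, rfl, rfl, rfl⟩
  · ext i j
    fin_cases i <;> fin_cases j <;> rfl
  · intro i
    fin_cases i <;> rfl
  · intro i j hij
    fin_cases i <;> fin_cases j <;> simp_all

end CoxeterGroup

section FiniteOrder

variable {a b c : ℕ}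

theorem exists_conj_mem_zpowers_of_isOfFinOrder (ha : a ≠ 0) (hb : b ≠ 0) (hc : c ≠ 0)
    (habc : (a : ℝ)⁻¹ + (b : ℝ)⁻¹ + (c : ℝ)⁻¹ < 1) {g : TriangleGroup a b c}
    (hg : IsOfFinOrder g) : ∃ t i, t⁻¹ * g * t ∈ Subgroup.zpowers (of i) := by
  have hainv : 0 < (a : ℝ)⁻¹ := by positivity
  have hbinv : 0 < (b : ℝ)⁻¹ := by positivity
  have hcinv : 0 < (c : ℝ)⁻¹ := by positivity
  obtain ⟨M, rfl, rfl, rfl⟩ := exists_coxeterMatrix (a := a) (b := b) (c := c)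
    (by rintro rfl; rw [Nat.cast_one, inv_one] at habc; linarith)
    (by rintro rfl; rw [Nat.cast_one, inv_one] at habc; linarith)
    (by rintro rfl; rw [Nat.cast_one, inv_one] at habc; linarith)
  have hM (i j : Fin 3) : M i j ≠ 0 := by
    fin_cases i <;> fin_cases j <;>
      first | assumption | exact M.symmetric _ _ ▸ ‹_› | simp
  have cs := M.toCoxeterSystem
  obtain ⟨u, hu, hneg⟩ := exists_canonicalForm_neg habc
  obtain ⟨w, i, hw⟩ := exists_conj_mem_closure_of_isOfFinOrder (hM := hM)
    (infinite_positiveRoots_of_canonicalForm_neg hu hneg) ((toCoxeterGroup cs).isOfFinOrder hg)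
  obtain ⟨t, ht⟩ := exists_conj_mem_zpowers_of_conj_mem_zpowers cs <|
    mem_zpowers_of_mem_closure_of_lengthParity cs hw
      (by simp [lengthParity_toCoxeterGroup])
  exact ⟨t, i + 1, ht⟩

theorem eq_one_of_isOfFinOrder_of_map_eq_one (ha : a ≠ 0) (hb : b ≠ 0) (hc : c ≠ 0)
    (habc : (a : ℝ)⁻¹ + (b : ℝ)⁻¹ + (c : ℝ)⁻¹ < 1) {H : Type*} [Group H]
    {f : TriangleGroup a b c →* H} (hf : ∀ i, orderOf (f (of i)) = ![a, b, c] i)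
    {g : TriangleGroup a b c} (hg : IsOfFinOrder g) (hfg : f g = 1) : g = 1 := by
  obtain ⟨t, i, ht⟩ := exists_conj_mem_zpowers_of_isOfFinOrder ha hb hc habc hg
  obtain ⟨n, hn⟩ := Subgroup.mem_zpowers_iff.1 ht
  have hker : f (of i) ^ n = 1 := by
    rw [← map_zpow, hn]
    simp [hfg]
  rw [← orderOf_dvd_iff_zpow_eq_one, hf] at hker
  obtain ⟨d, rfl⟩ := hker
  have hone : t⁻¹ * g * t = 1 := by
    rw [← hn]
    simp only [zpow_mul, zpow_natCast, of_pow, one_zpow]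
  simpa [mul_assoc, inv_mul_eq_one] using hone

end FiniteOrder

end TriangleGroup

open scoped MatrixGroups

section CardPSL

open Matrix

lemma card_SL_mul_card_units {n R : Type*} [Fintype n] [DecidableEq n] [Nonempty n]
    [CommRing R] : Nat.card (SpecialLinearGroup n R) * Nat.card Rˣ = Nat.card (GL n R) := by
  have hker : (GeneralLinearGroup.det (n := n) (R := R)).ker = SpecialLinearGroup.toGL.range :=
    SetLike.coe_injective SpecialLinearGroup.range_toGL.symm
  rw [← Subgroup.card_mul_index (GeneralLinearGroup.det (n := n) (R := R)).ker,
    Subgroup.index_ker, MonoidHom.range_eq_top.mpr GeneralLinearGroup.det_surjective,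
    Subgroup.card_top, hker]
  congr 1
  exact Nat.card_congr (MonoidHom.ofInjective SpecialLinearGroup.toGL_injective).toEquiv

variable (F : Type*) [Field F]

lemma card_SL_two [Finite F] : Nat.card SL(2, F) = Nat.card F * (Nat.card F ^ 2 - 1) := by
  have := Fintype.ofFinite F
  have hcard : 1 < Nat.card F := Finite.one_lt_card
  have h := card_SL_mul_card_units (n := Fin 2) (R := F)
  rw [card_GL_field, Nat.card_units, Fin.prod_univ_two, ← Nat.card_eq_fintype_card] at h
  simp only [Fin.val_zero, Fin.val_one, pow_zero, pow_one] at h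
  refine Nat.eq_of_mul_eq_mul_right (Nat.sub_pos_of_lt hcard) (h.trans ?_)
  rw [sq, ← Nat.mul_sub_one]
  ring

lemma card_center_SL_two (hF : ringChar F ≠ 2) :
    Nat.card (Subgroup.center SL(2, F)) = 2 := by
  rw [Nat.card_congr (SpecialLinearGroup.center_equiv_rootsOfUnity' (0 : Fin 2)).toEquiv,
    Fintype.card_fin]
  simpa using (IsPrimitiveRoot.neg_one (ringChar F) hF).card_rootsOfUnity

lemma two_mul_card_PSL_two [Finite F] (hF : ringChar F ≠ 2) :
    2 * Nat.card PSL(2, F) = Nat.card F * (Nat.card F ^ 2 - 1) := by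
  have h := Subgroup.card_mul_index (Subgroup.center SL(2, F))
  rwa [card_center_SL_two F hF, card_SL_two] at h

end CardPSL

section ModularReduction

open Matrix ModularGroup

lemma map_SL_two_surjective {R F : Type*} [CommRing R] [Field F] {f : R →+* F}
    (hf : Function.Surjective f) :
    Function.Surjective (SpecialLinearGroup.map (n := Fin 2) f) := by
  refine SL2.transvection_induction _ (fun i j hij c ↦ ?_) ?_
  · obtain ⟨r, rfl⟩ := hf c
    refine ⟨SpecialLinearGroup.transvection hij r, ?_⟩
    ext k l
    simp [SpecialLinearGroup.transvection_coe, Matrix.one_apply, Matrix.single_apply, apply_ite f]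
  · rintro _ _ ⟨A, rfl⟩ ⟨B, rfl⟩
    exact ⟨A * B, map_mul _ A B⟩

/-- The reduction of integral unimodular matrices to `PSL(2, R)`, for example modulo `p`. -/
def modularReduction (R : Type*) [CommRing R] : SL(2, ℤ) →* PSL(2, R) :=
  (QuotientGroup.mk' _).comp (SpecialLinearGroup.map (Int.castRingHom R))

section CommRing

variable {R : Type*} [CommRing R]

lemma modularReduction_eq_one_iff {A : SL(2, ℤ)} :
    modularReduction R A = 1 ↔
      SpecialLinearGroup.map (Int.castRingHom R) A ∈ Subgroup.center SL(2, R) :=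
  QuotientGroup.eq_one_iff _

lemma modularReduction_neg_one : modularReduction R (-1) = 1 := by
  rw [modularReduction_eq_one_iff, Subgroup.mem_center_iff]
  have hmap : SpecialLinearGroup.map (Int.castRingHom R) (-1 : SL(2, ℤ)) = -1 := by
    ext i j
    fin_cases i <;> fin_cases j <;> simp
  simp [hmap]

lemma modularReduction_ne_one {A : SL(2, ℤ)} (hA : (A 0 1 : R) ≠ 0) :
    modularReduction R A ≠ 1 := by
  rw [Ne, modularReduction_eq_one_iff, Matrix.SpecialLinearGroup.mem_center_iff]
  rintro ⟨r, -, hr⟩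
  exact hA (by simpa using (congrFun₂ hr 0 1).symm)

end CommRing

variable (p : ℕ)

lemma modularReduction_T_pow : modularReduction (ZMod p) (T ^ p) = 1 := by
  have hmap : SpecialLinearGroup.map (Int.castRingHom (ZMod p)) (T ^ p) = 1 := by
    rw [← zpow_natCast]
    ext i j
    simp only [SpecialLinearGroup.map_apply_coe, coe_T_zpow, RingHom.mapMatrix_apply]
    fin_cases i <;> fin_cases j <;> simp
  rw [modularReduction_eq_one_iff, hmap]
  exact one_mem _

lemma modularReduction_surjective [Fact p.Prime] :
    Function.Surjective (modularReduction (ZMod p)) :=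
  (QuotientGroup.mk'_surjective _).comp (map_SL_two_surjective ZMod.intCast_surjective)

end ModularReduction

namespace TriangleGroup

open PresentedGroup Matrix ModularGroup

/-- The matrices in `SL(2, ℤ)` whose reductions modulo `p` represent the generators of `T(2,3,p)`:
in the modular group they have orders `2`, `3` and `∞`. -/
def modularRotation : Fin 3 → SL(2, ℤ) := ![S, S⁻¹ * T⁻¹, T]

variable (p : ℕ)

lemma modularReduction_modularRotation_pow (i : Fin 3) :
    modularReduction (ZMod p) (modularRotation i) ^ ![2, 3, p] i = 1 := by
  rw [← map_pow]
  fin_cases i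
  · exact (congrArg _ (by decide : S ^ 2 = -1)).trans modularReduction_neg_one
  · exact (congrArg _ (by decide : (S⁻¹ * T⁻¹) ^ 3 = -1)).trans modularReduction_neg_one
  · exact modularReduction_T_pow p

lemma isUnit_modularRotation_zero_one (i : Fin 3) : IsUnit (modularRotation i 0 1) := by
  decide +revert

lemma orderOf_modularReduction_modularRotation [Fact p.Prime] (i : Fin 3) :
    orderOf (modularReduction (ZMod p) (modularRotation i)) = ![2, 3, p] i := by
  have hprime : (![2, 3, p] i).Prime := by
    fin_cases i
    exacts [Nat.prime_two, Nat.prime_three, ‹Fact p.Prime›.out]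
  have := Fact.mk hprime
  refine orderOf_eq_prime (modularReduction_modularRotation_pow p i) (modularReduction_ne_one ?_)
  exact ((isUnit_modularRotation_zero_one i).map (Int.castRingHom (ZMod p))).ne_zero

/-- The homomorphism `T(2,3,p) → PSL(2,p)` through which `PSL(2,p)` becomes a quotient of the
triangle group. -/
def toPSL : TriangleGroup 2 3 p →* PSL(2, ZMod p) :=
  lift (fun i ↦ modularReduction (ZMod p) (modularRotation i))
    (modularReduction_modularRotation_pow p)
    (by simp [← map_mul, modularRotation])

lemma toPSL_of (i : Fin 3) : toPSL p (of i) = modularReduction (ZMod p) (modularRotation i) :=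
  lift_of _ _ i

variable [Fact p.Prime]

lemma toPSL_surjective : Function.Surjective (toPSL p) := by
  have hgen : (toPSL p).range.comap (modularReduction (ZMod p)) = ⊤ := by
    rw [eq_top_iff, ← SpecialLinearGroup.SL2Z_generators, Subgroup.closure_le]
    rintro _ (rfl | rfl)
    · exact ⟨of 0, toPSL_of p 0⟩
    · exact ⟨of 2, toPSL_of p 2⟩
  intro x
  obtain ⟨A, rfl⟩ := modularReduction_surjective p x
  exact hgen.ge (Subgroup.mem_top A)

variable {p}

lemma eq_one_of_isOfFinOrder_of_toPSL_eq_one (hp : 7 ≤ p) {g : TriangleGroup 2 3 p}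
    (hg : IsOfFinOrder g) (h : toPSL p g = 1) : g = 1 := by
  have hsum : ((2 : ℕ) : ℝ)⁻¹ + ((3 : ℕ) : ℝ)⁻¹ + (p : ℝ)⁻¹ < 1 := by
    have hle : (p : ℝ)⁻¹ ≤ 7⁻¹ := inv_anti₀ (by norm_num) (by exact_mod_cast hp)
    norm_num at hle ⊢
    linarith
  exact eq_one_of_isOfFinOrder_of_map_eq_one two_ne_zero three_ne_zero (by omega) hsum
    (fun i ↦ by rw [toPSL_of, orderOf_modularReduction_modularRotation]) hg h

lemma index_ker_toPSL (hp : p ≠ 2) : (toPSL p).ker.index = p * (p ^ 2 - 1) / 2 := by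
  have hcard := two_mul_card_PSL_two (ZMod p) (by rwa [ZMod.ringChar_zmod_n])
  rw [Nat.card_zmod] at hcard
  rw [Subgroup.index_ker, MonoidHom.range_eq_top.mpr (toPSL_surjective p), Subgroup.card_top,
    ← hcard, Nat.mul_div_cancel_left _ two_pos]

lemma isSimpleGroup_quotient_ker_toPSL (hp : 4 ≤ p) :
    IsSimpleGroup (TriangleGroup 2 3 p ⧸ (toPSL p).ker) := by
  have : IsSimpleGroup PSL(2, ZMod p) :=
    ProjectiveSpecialLinearGroup.rank_two_simple (by rwa [Nat.card_zmod])
  exact (QuotientGroup.quotientKerEquivOfSurjective _ (toPSL_surjective p)).isSimpleGroup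

end TriangleGroup

theorem triangleGroup_237_normal_torsionFree_index168_simple_quotient_general
    (p : ℕ) [Fact p.Prime] (hp : 7 ≤ p) :
    ∃ (N : Subgroup (TriangleGroup 2 3 p)) (hN : N.Normal),
      N.index = p * (p ^ 2 - 1) / 2 ∧ (∀ x ∈ N, IsOfFinOrder x → x = 1) ∧
      (letI := hN; IsSimpleGroup (TriangleGroup 2 3 p ⧸ N)) :=
  ⟨(TriangleGroup.toPSL p).ker, inferInstance, TriangleGroup.index_ker_toPSL (by omega),
    fun _ hx hfin ↦ TriangleGroup.eq_one_of_isOfFinOrder_of_toPSL_eq_one hp hfin hx,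
    TriangleGroup.isSimpleGroup_quotient_ker_toPSL (by omega)⟩

/-- The triangle group `T(2,3,7)` has a torsion-free normal subgroup `N` of
index exactly 168 whose quotient is a simple group (of order 168). -/
theorem triangleGroup_237_normal_torsionFree_index168_simple_quotient :
    ∃ (N : Subgroup (TriangleGroup 2 3 7)) (hN : N.Normal),
      N.index = 168 ∧ (∀ x ∈ N, IsOfFinOrder x → x = 1) ∧
      (letI := hN; IsSimpleGroup (TriangleGroup 2 3 7 ⧸ N)) := by
  have : Fact (Nat.Prime 7) := ⟨by norm_num⟩
  exact triangleGroup_237_normal_torsionFree_index168_simple_quotient_general 7 le_rfl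
end
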